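/- Fix T > 0, ε > 0, ν ≥ 0, and suppose |w(t)| ≤ M and ℓ(t) ≤ L for all t ∈ [0,T]. Define F̃(t) := ∫₀^{ℓ(t)} ε²·u_t(t,σ)( u(t,σ) − r(t,σ) )dσ + (νε/2)∫₀^{ℓ(t)} ( u(t,σ) − r(t,σ) )²dσ. Then F̃ is absolutely continuous on [0,T] and there exists a constant C > 0, depending only on L, M, ν and ℓ₀, such that for a.e. t ∈ (0,T): F̃'(t) ≤ 2∫₀^{ℓ(t)} ε²u_t(t,σ)²dσ − Ẽ(t) + C·ε²( ẇ(t)² + ℓ'(t)² ), where Ẽ(t) := ½∫₀^{ℓ(t)}( ε²u_t(t,σ)² + (u_x(t,σ) − r_x(t,σ))² )dσ. -/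

import Mathlib

/-!
The idea is to rescale the moving interval to a fixed one and to treat the remainder as a total
derivative plus a quadratic form.

Put `g = u − r`, so that `g(t,0) = g(t,ℓ(t)) = 0`. Substituting `σ = ℓ(t) y` gives
`F̃(t) = ∫₀¹ dens(t, ℓ(t), y) dy`, where `dens` is `C¹` in three variables near the compact set
`{(t, ℓ(t), y) : t ∈ [0,T], y ∈ [0,1]}`, hence Lipschitz on it
(`LocallyLipschitzOn.exists_lipschitzOnWith_of_compact`). As `ℓ` is Lipschitz, the integrand is
Lipschitz in `t` uniformly in `y` (`exists_lipschitz_dens`). So `F̃` is Lipschitz, in particular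
absolutely continuous, and at each `t` where `ℓ` is differentiable (almost every `t`) one may
differentiate under the integral sign (`hasDerivAt_dens`).

Transported back to `σ`, and with `ε² u_tt` replaced by `u_xx − νε u_t`, the integrand of `F̃'` is
`Φ_σ − g_x² + νε g_x R + ε² u_t² − ε² u_t r_t`. Here `R(t,σ) = ∫₀^σ r_t`, and
`Φ = (ℓ'/ℓ) σ (ε² u_t g + (νε/2) g²) + g g_x − νε g R` vanishes at both ends because `g` does.
Integrating `νε g r_t` by parts against the explicit polynomial `R` replaces a Poincaré
inequality for `g`. Young's inequality, with `|r_t| ≤ |ẇ| + (M/ℓ₀)|ℓ'|` and `|R| ≤ L|ẇ| + M|ℓ'|`,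
bounds the remaining quadratic expression pointwise (`remainder_le`), and integration over
`[0, ℓ(t)]` gives the claim (`slice_ineq`).
-/

open MeasureTheory Set

/-- Partial derivative in time. -/
noncomputable def pt (u : ℝ → ℝ → ℝ) (t x : ℝ) : ℝ := deriv (fun s => u s x) t

/-- Partial derivative in space. -/
noncomputable def px (u : ℝ → ℝ → ℝ) (t x : ℝ) : ℝ := deriv (fun y => u t y) x

/-- Second partial derivative in time. -/
noncomputable def ptt (u : ℝ → ℝ → ℝ) (t x : ℝ) : ℝ := deriv (fun s => pt u s x) t

/-- Second partial derivative in space. -/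
noncomputable def pxx (u : ℝ → ℝ → ℝ) (t x : ℝ) : ℝ := deriv (fun y => px u t y) x

/-- The modified energy `Ẽ(t) = ½∫₀^{ℓ(t)} (ε²u_t² + (u_x − r_x)²)`, where
`r(t,x) = w(t)(1 − x/ℓ(t))`, so `r_x(t,x) = −w(t)/ℓ(t)` with `w(t) = u(t,0)`. -/
noncomputable def Emod (ε : ℝ) (ℓ : ℝ → ℝ) (u : ℝ → ℝ → ℝ) (t : ℝ) : ℝ :=
  (1/2) * ∫ σ in (0:ℝ)..ℓ t,
    (ε ^ 2 * (pt u t σ) ^ 2 + (px u t σ + u t 0 / ℓ t) ^ 2)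

/-- The auxiliary functional
`F̃(t) = ∫₀^{ℓ(t)} ε²u_t(u − r) + (νε/2)∫₀^{ℓ(t)} (u − r)²` with
`r(t,x) = w(t)(1 − x/ℓ(t))`, `w(t) = u(t,0)`. -/
noncomputable def Fmod (ε ν : ℝ) (ℓ : ℝ → ℝ) (u : ℝ → ℝ → ℝ) (t : ℝ) : ℝ :=
  (∫ σ in (0:ℝ)..ℓ t, ε ^ 2 * pt u t σ * (u t σ - u t 0 * (1 - σ / ℓ t)))
    + (ν * ε / 2) * ∫ σ in (0:ℝ)..ℓ t, (u t σ - u t 0 * (1 - σ / ℓ t)) ^ 2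

/-! ### Pointwise bounds for the remainder -/

/-- Bound for `R(σ) = ∫₀^σ r_t`, where `w' = ẇ` and `d = ℓ'`. -/
lemma R_sq_le {l L M w w' d σ : ℝ} (hlp : 0 < l) (hL : l ≤ L) (hw2 : w ^ 2 ≤ M ^ 2)
    (hσ0 : 0 ≤ σ) (hσl : σ ≤ l) :
    (w' * (σ - σ ^ 2 / (2 * l)) + w * d * σ ^ 2 / (2 * l ^ 2)) ^ 2
      ≤ 2 * (L ^ 2 * w' ^ 2) + 2 * (M ^ 2 * d ^ 2) := by
  have s0 : 0 ≤ σ / l := div_nonneg hσ0 hlp.le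
  have s1 : σ / l ≤ 1 := (div_le_one hlp).2 hσl
  have e : w' * (σ - σ ^ 2 / (2 * l)) + w * d * σ ^ 2 / (2 * l ^ 2)
      = w' * (σ * (1 - σ / l / 2)) + w * d * ((σ / l) ^ 2 / 2) := by
    field_simp
  rw [e]
  have h0 : 0 ≤ σ * (1 - σ / l / 2) := mul_nonneg hσ0 (by linarith)
  have h0' : σ * (1 - σ / l / 2) ≤ L :=
    (mul_le_of_le_one_right hσ0 (by linarith)).trans (hσl.trans hL)
  have h1 : (w' * (σ * (1 - σ / l / 2))) ^ 2 ≤ L ^ 2 * w' ^ 2 := by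
    rw [mul_pow, mul_comm]; gcongr
  have h2 : (w * d * ((σ / l) ^ 2 / 2)) ^ 2 ≤ M ^ 2 * d ^ 2 := by
    rw [mul_pow, mul_pow]
    have : (σ / l) ^ 2 / 2 ≤ 1 := by nlinarith
    calc w ^ 2 * d ^ 2 * ((σ / l) ^ 2 / 2) ^ 2 ≤ w ^ 2 * d ^ 2 :=
          mul_le_of_le_one_right (by positivity) (pow_le_one₀ (by positivity) this)
      _ ≤ M ^ 2 * d ^ 2 := by gcongr
  linarith [add_sq_le (a := w' * (σ * (1 - σ / l / 2))) (b := w * d * ((σ / l) ^ 2 / 2))]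

/-- Bound for `r_t(σ) = ẇ(1 − σ/l) + w ℓ' σ / l²`, where `w' = ẇ` and `d = ℓ'`. -/
lemma rt_sq_le {l0 l M w w' d σ : ℝ} (hl0 : 0 < l0) (hl : l0 ≤ l) (hw2 : w ^ 2 ≤ M ^ 2)
    (hσ0 : 0 ≤ σ) (hσl : σ ≤ l) :
    (w' * (1 - σ / l) + w * d * σ / l ^ 2) ^ 2
      ≤ 2 * w' ^ 2 + 2 * (M ^ 2 / l0 ^ 2 * d ^ 2) := by
  have hlp : 0 < l := hl0.trans_le hl
  have s0 : 0 ≤ σ / l := div_nonneg hσ0 hlp.le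
  have s1 : σ / l ≤ 1 := (div_le_one hlp).2 hσl
  have hdl : (d / l) ^ 2 ≤ d ^ 2 / l0 ^ 2 := by
    rw [div_pow]; gcongr
  have e : w' * (1 - σ / l) + w * d * σ / l ^ 2
      = w' * (1 - σ / l) + w * (d / l) * (σ / l) := by
    field_simp
  rw [e]
  have h1 : (w' * (1 - σ / l)) ^ 2 ≤ w' ^ 2 := by
    rw [mul_pow]
    exact mul_le_of_le_one_right (sq_nonneg _) (pow_le_one₀ (by linarith) (by linarith))
  have h2 : (w * (d / l) * (σ / l)) ^ 2 ≤ M ^ 2 / l0 ^ 2 * d ^ 2 := by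
    rw [mul_pow, mul_pow]
    calc w ^ 2 * (d / l) ^ 2 * (σ / l) ^ 2 ≤ w ^ 2 * (d / l) ^ 2 :=
          mul_le_of_le_one_right (by positivity) (pow_le_one₀ s0 s1)
      _ ≤ M ^ 2 * (d ^ 2 / l0 ^ 2) := by gcongr
      _ = _ := by ring
  linarith [add_sq_le (a := w' * (1 - σ / l)) (b := w * (d / l) * (σ / l))]

/-- Young's inequality for the part of the integrand of `F̃'` that is not a total derivative;
`P` stands for `u_t` and `Q` for `u_x − r_x`. -/
lemma remainder_le {l0 l L M ν ε w w' d σ : ℝ}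
    (hl0 : 0 < l0) (hl : l0 ≤ l) (hL : l ≤ L) (hw : |w| ≤ M)
    (hσ0 : 0 ≤ σ) (hσl : σ ≤ l) (P Q : ℝ) :
    -Q ^ 2 + ν * ε * (Q * (w' * (σ - σ ^ 2 / (2 * l)) + w * d * σ ^ 2 / (2 * l ^ 2)))
        + ε ^ 2 * P ^ 2 - ε ^ 2 * (P * (w' * (1 - σ / l) + w * d * σ / l ^ 2))
      ≤ 2 * (ε ^ 2 * P ^ 2) - (1/2) * (ε ^ 2 * P ^ 2 + Q ^ 2)
        + ((1 + M ^ 2 / l0 ^ 2) + ν ^ 2 * (L ^ 2 + M ^ 2)) * ε ^ 2 * (w' ^ 2 + d ^ 2) := by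
  have hw2 : w ^ 2 ≤ M ^ 2 := sq_le_sq' (by linarith [neg_abs_le w]) ((le_abs_self w).trans hw)
  have hR2 := R_sq_le (w' := w') (d := d) (hl0.trans_le hl) hL hw2 hσ0 hσl
  have hrt2 := rt_sq_le (w' := w') (d := d) hl0 hl hw2 hσ0 hσl
  generalize w' * (σ - σ ^ 2 / (2 * l)) + w * d * σ ^ 2 / (2 * l ^ 2) = R at *
  generalize w' * (1 - σ / l) + w * d * σ / l ^ 2 = rt at *
  have hb : 1 / 2 * (ν ^ 2 * R ^ 2) + 1 / 2 * rt ^ 2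
      ≤ ((1 + M ^ 2 / l0 ^ 2) + ν ^ 2 * (L ^ 2 + M ^ 2)) * (w' ^ 2 + d ^ 2) := by
    have h1 := mul_le_mul_of_nonneg_left hR2 (sq_nonneg ν)
    have h2 : 0 ≤ M ^ 2 / l0 ^ 2 * w' ^ 2 + d ^ 2 + ν ^ 2 * (L ^ 2 * d ^ 2)
      + ν ^ 2 * (M ^ 2 * w' ^ 2) := by positivity
    linarith
  have hb' := mul_le_mul_of_nonneg_left hb (sq_nonneg ε)
  have y1 := sq_nonneg (Q - ν * ε * R)
  have y2 := mul_nonneg (sq_nonneg ε) (sq_nonneg (P + rt))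
  linarith

/-! ### The inequality at a fixed time -/

/-- The energy inequality at a fixed time `t`, as a statement about functions of `σ` alone:
`v, q, qx, P, Px, a` stand for `u, u_x, u_xx, u_t, u_tx, u_tt`, and `l, d, w, w'` for
`ℓ, ℓ', w, ẇ`. The left-hand side is `F̃'(t)`. -/
lemma slice_ineq {l0 l L M ν ε w w' d : ℝ} {v q qx P Px a : ℝ → ℝ}
    (hl0 : 0 < l0) (hl : l0 ≤ l) (hL : l ≤ L) (hw : |w| ≤ M)
    (hv : ∀ σ ∈ Icc 0 l, HasDerivAt v (q σ) σ)
    (hq : ∀ σ ∈ Icc 0 l, HasDerivAt q (qx σ) σ)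
    (hP : ∀ σ ∈ Icc 0 l, HasDerivAt P (Px σ) σ)
    (hqx : ContinuousOn qx (Icc 0 l)) (hPx : ContinuousOn Px (Icc 0 l))
    (ha : ContinuousOn a (Icc 0 l))
    (hv0 : v 0 = w) (hvl : v l = 0)
    (hpde : ∀ σ ∈ Ioo 0 l, ε ^ 2 * a σ - qx σ + ν * ε * P σ = 0) :
    ∫ σ in (0:ℝ)..l,
        (d / l * (ε ^ 2 * P σ * (v σ - w * (1 - σ / l))
            + ν * ε / 2 * (v σ - w * (1 - σ / l)) ^ 2)
          + ε ^ 2 * (a σ + Px σ * (d * σ / l)) * (v σ - w * (1 - σ / l))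
          + (ε ^ 2 * P σ + ν * ε * (v σ - w * (1 - σ / l)))
            * (P σ + q σ * (d * σ / l) - w' * (1 - σ / l)))
      ≤ 2 * (∫ σ in (0:ℝ)..l, ε ^ 2 * (P σ) ^ 2)
        - (1/2) * (∫ σ in (0:ℝ)..l, (ε ^ 2 * (P σ) ^ 2 + (q σ + w / l) ^ 2))
        + L * ((1 + M ^ 2 / l0 ^ 2) + ν ^ 2 * (L ^ 2 + M ^ 2)) * ε ^ 2 * (w' ^ 2 + d ^ 2) := by
  have hlp : 0 < l := hl0.trans_le hl
  have hM : 0 ≤ M := (abs_nonneg w).trans hw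
  have cv : ContinuousOn v (Icc 0 l) := fun σ h => (hv σ h).continuousAt.continuousWithinAt
  have cq : ContinuousOn q (Icc 0 l) := fun σ h => (hq σ h).continuousAt.continuousWithinAt
  have cP : ContinuousOn P (Icc 0 l) := fun σ h => (hP σ h).continuousAt.continuousWithinAt
  have hu : uIcc 0 l = Icc 0 l := uIcc_of_le hlp.le
  set g : ℝ → ℝ := fun σ => v σ - w * (1 - σ / l) with hg
  set R : ℝ → ℝ := fun σ => w' * (σ - σ ^ 2 / (2 * l)) + w * d * σ ^ 2 / (2 * l ^ 2) with hR
  set rt : ℝ → ℝ := fun σ => w' * (1 - σ / l) + w * d * σ / l ^ 2 with hrt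
  have cg : ContinuousOn g (Icc 0 l) := by fun_prop
  have cR : ContinuousOn R (Icc 0 l) := by fun_prop
  have crt : ContinuousOn rt (Icc 0 l) := by fun_prop
  have hgd : ∀ σ ∈ Icc 0 l, HasDerivAt g (q σ + w / l) σ := by
    intro σ h
    have h1 : HasDerivAt (fun σ : ℝ => w * (1 - σ / l)) (w * (0 - 1 / l)) σ :=
      (((hasDerivAt_const σ (1:ℝ)).sub ((hasDerivAt_id σ).div_const l)).const_mul w)
    refine ((hv σ h).sub h1).congr_deriv ?_
    ring
  have hRd : ∀ σ, HasDerivAt R (rt σ) σ := by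
    intro σ
    have h1 := (((hasDerivAt_id σ).sub (((hasDerivAt_id σ).pow 2).div_const (2 * l))).const_mul w').add
      ((((hasDerivAt_id σ).pow 2).const_mul (w * d)).div_const (2 * l ^ 2))
    refine h1.congr_deriv ?_
    simp [hrt]; field_simp
  -- `Φ` collects the boundary terms: it vanishes at both ends because `g` does.
  set Φ : ℝ → ℝ := fun σ => d / l * (σ * (ε ^ 2 * (P σ * g σ) + ν * ε / 2 * (g σ * g σ)))
      + g σ * (q σ + w / l) - ν * ε * (g σ * R σ) with hΦ
  set Φ' : ℝ → ℝ := fun σ => d / l * ((ε ^ 2 * (P σ * g σ) + ν * ε / 2 * (g σ * g σ))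
        + σ * (ε ^ 2 * (Px σ * g σ + P σ * (q σ + w / l)) + ν * ε * (g σ * (q σ + w / l))))
      + ((q σ + w / l) ^ 2 + g σ * qx σ) - ν * ε * ((q σ + w / l) * R σ + g σ * rt σ) with hΦ'
  have hΦd : ∀ σ ∈ Icc 0 l, HasDerivAt Φ (Φ' σ) σ := by
    intro σ h
    have G := hgd σ h
    have h1 := (((hasDerivAt_id σ).mul
      ((((hP σ h).mul G).const_mul (ε ^ 2)).add ((G.mul G).const_mul (ν * ε / 2)))).const_mul (d / l)).add
      (G.mul ((hq σ h).add_const (w / l)))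
    have h2 := h1.sub ((G.mul (hRd σ)).const_mul (ν * ε))
    refine h2.congr_deriv ?_
    simp [hΦ']; ring
  have cΦ' : ContinuousOn Φ' (Icc 0 l) := by fun_prop
  have iΦ' : IntervalIntegrable Φ' volume 0 l := (hu ▸ cΦ').intervalIntegrable
  have g0 : g 0 = 0 := by simp [hg, hv0]
  have gl : g l = 0 := by simp [hg, hvl, hlp.ne']
  have hzero : ∫ σ in (0:ℝ)..l, Φ' σ = 0 := by
    rw [intervalIntegral.integral_eq_sub_of_hasDerivAt (f := Φ) (by rwa [hu]) iΦ']
    simp [hΦ, g0, gl]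
  set c := ((1 + M ^ 2 / l0 ^ 2) + ν ^ 2 * (L ^ 2 + M ^ 2)) * ε ^ 2 * (w' ^ 2 + d ^ 2) with hc
  have hc0 : 0 ≤ c := by positivity
  have i1 : IntervalIntegrable (fun σ => ε ^ 2 * (P σ) ^ 2) volume 0 l :=
    ContinuousOn.intervalIntegrable (by rw [hu]; fun_prop)
  have i2 : IntervalIntegrable (fun σ => ε ^ 2 * (P σ) ^ 2 + (q σ + w / l) ^ 2) volume 0 l :=
    ContinuousOn.intervalIntegrable (by rw [hu]; fun_prop)
  have key : ∫ σ in (0:ℝ)..l, (Φ' σ + (2 * (ε ^ 2 * (P σ) ^ 2)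
      - (1/2) * (ε ^ 2 * (P σ) ^ 2 + (q σ + w / l) ^ 2) + c))
      = 2 * (∫ σ in (0:ℝ)..l, ε ^ 2 * (P σ) ^ 2)
        - (1/2) * (∫ σ in (0:ℝ)..l, (ε ^ 2 * (P σ) ^ 2 + (q σ + w / l) ^ 2)) + l * c := by
    rw [intervalIntegral.integral_add iΦ'
        (((i1.const_mul 2).sub (i2.const_mul (1/2))).add intervalIntegrable_const), hzero,
      intervalIntegral.integral_add ((i1.const_mul 2).sub (i2.const_mul (1/2)))
        intervalIntegrable_const,
      intervalIntegral.integral_sub (i1.const_mul 2) (i2.const_mul (1/2)),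
      intervalIntegral.integral_const_mul, intervalIntegral.integral_const_mul]
    simp
  have hfin : l * c ≤ L * c := mul_le_mul_of_nonneg_right hL hc0
  have hE : ∫ σ in (0:ℝ)..l,
        (d / l * (ε ^ 2 * P σ * g σ + ν * ε / 2 * (g σ) ^ 2)
          + ε ^ 2 * (a σ + Px σ * (d * σ / l)) * g σ
          + (ε ^ 2 * P σ + ν * ε * g σ) * (P σ + q σ * (d * σ / l) - w' * (1 - σ / l)))
      ≤ ∫ σ in (0:ℝ)..l, (Φ' σ + (2 * (ε ^ 2 * (P σ) ^ 2)
      - (1/2) * (ε ^ 2 * (P σ) ^ 2 + (q σ + w / l) ^ 2) + c)) := by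
    apply intervalIntegral.integral_mono_on_of_le_Ioo hlp.le
    · exact ContinuousOn.intervalIntegrable (by rw [hu]; fun_prop)
    · exact iΦ'.add
        (((i1.const_mul 2).sub (i2.const_mul (1/2))).add intervalIntegrable_const)
    · intro σ hσ
      -- The equation eliminates `u_tt`, and `g_xx = u_xx` since `r` is affine in `σ`.
      have hid : d / l * (ε ^ 2 * P σ * g σ + ν * ε / 2 * (g σ) ^ 2)
          + ε ^ 2 * (a σ + Px σ * (d * σ / l)) * g σ
          + (ε ^ 2 * P σ + ν * ε * g σ) * (P σ + q σ * (d * σ / l) - w' * (1 - σ / l))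
          = Φ' σ + (-(q σ + w / l) ^ 2 + ν * ε * ((q σ + w / l) * R σ)
              + ε ^ 2 * (P σ) ^ 2 - ε ^ 2 * (P σ * rt σ)) := by
        have hp : qx σ = ε ^ 2 * a σ + ν * ε * P σ := by linarith [hpde σ hσ]
        simp only [hΦ', hrt, hp]
        field_simp
        ring
      rw [hid]
      have := remainder_le (ε := ε) (ν := ν) (w' := w') (d := d) hl0 hl hL hw hσ.1.le hσ.2.le
        (P σ) (q σ + w / l)
      simp only [hR, hrt, hc]
      linarith
  have := hE.trans_eq key
  simp only [hc] at this hfin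
  simp only [hg] at this
  linarith

/-! ### Partial derivatives of a smooth function on an open set -/

section regularity

variable {f : ℝ → ℝ → ℝ} {U : Set (ℝ × ℝ)} {n : WithTop ℕ∞}

lemma hasFDerivAt_of_contDiffOn (hU : IsOpen U)
    (hf : ContDiffOn ℝ n (fun p : ℝ × ℝ => f p.1 p.2) U) (hn : n ≠ 0)
    {t x : ℝ} (h : (t, x) ∈ U) :
    HasFDerivAt (fun p : ℝ × ℝ => f p.1 p.2)
      (fderiv ℝ (fun p : ℝ × ℝ => f p.1 p.2) (t, x)) (t, x) :=
  ((hf.differentiableOn hn).differentiableAt (hU.mem_nhds h)).hasFDerivAt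

lemma pt_eq_fderiv (hU : IsOpen U)
    (hf : ContDiffOn ℝ n (fun p : ℝ × ℝ => f p.1 p.2) U) (hn : n ≠ 0)
    {t x : ℝ} (h : (t, x) ∈ U) :
    pt f t x = fderiv ℝ (fun p : ℝ × ℝ => f p.1 p.2) (t, x) (1, 0) :=
  ((hasFDerivAt_of_contDiffOn hU hf hn h).comp_hasDerivAt (f := fun s => (s, x)) t
    ((hasDerivAt_id t).prodMk (hasDerivAt_const t x))).deriv

lemma px_eq_fderiv (hU : IsOpen U)
    (hf : ContDiffOn ℝ n (fun p : ℝ × ℝ => f p.1 p.2) U) (hn : n ≠ 0)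
    {t x : ℝ} (h : (t, x) ∈ U) :
    px f t x = fderiv ℝ (fun p : ℝ × ℝ => f p.1 p.2) (t, x) (0, 1) :=
  ((hasFDerivAt_of_contDiffOn hU hf hn h).comp_hasDerivAt (f := fun s => (t, s)) x
    ((hasDerivAt_const x t).prodMk (hasDerivAt_id x))).deriv

/-- The chain rule along a plane curve, in terms of the partial derivatives `pt` and `px`. -/
lemma hasDerivAt_curve (hU : IsOpen U)
    (hf : ContDiffOn ℝ n (fun p : ℝ × ℝ => f p.1 p.2) U) (hn : n ≠ 0)
    {a b : ℝ → ℝ} {a' b' t : ℝ} (ha : HasDerivAt a a' t) (hb : HasDerivAt b b' t)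
    (h : (a t, b t) ∈ U) :
    HasDerivAt (fun s => f (a s) (b s)) (pt f (a t) (b t) * a' + px f (a t) (b t) * b') t := by
  have h1 := (hasFDerivAt_of_contDiffOn hU hf hn h).comp_hasDerivAt (f := fun s => (a s, b s)) t
    (ha.prodMk hb)
  refine h1.congr_deriv ?_
  rw [pt_eq_fderiv hU hf hn h, px_eq_fderiv hU hf hn h]
  have : ((a', b') : ℝ × ℝ) = a' • ((1, 0) : ℝ × ℝ) + b' • ((0, 1) : ℝ × ℝ) := by simp
  rw [this, map_add, map_smul, map_smul]
  simp [mul_comm]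

lemma contDiffOn_pt (hU : IsOpen U)
    (hf : ContDiffOn ℝ (n + 1) (fun p : ℝ × ℝ => f p.1 p.2) U) :
    ContDiffOn ℝ n (fun p : ℝ × ℝ => pt f p.1 p.2) U :=
  ((hf.fderiv_of_isOpen hU le_rfl).clm_apply contDiffOn_const).congr
    fun _ hp => pt_eq_fderiv hU hf (by simp) hp

lemma contDiffOn_px (hU : IsOpen U)
    (hf : ContDiffOn ℝ (n + 1) (fun p : ℝ × ℝ => f p.1 p.2) U) :
    ContDiffOn ℝ n (fun p : ℝ × ℝ => px f p.1 p.2) U :=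
  ((hf.fderiv_of_isOpen hU le_rfl).clm_apply contDiffOn_const).congr
    fun _ hp => px_eq_fderiv hU hf (by simp) hp

lemma continuousOn_slice {l t : ℝ} (hf : ContDiffOn ℝ n (fun p : ℝ × ℝ => f p.1 p.2) U)
    (h : ∀ σ ∈ Icc 0 l, (t, σ) ∈ U) : ContinuousOn (fun σ => f t σ) (Icc 0 l) :=
  hf.continuousOn.comp (f := fun σ : ℝ => (t, σ)) (by fun_prop) h

end regularity

/-! ### Rescaling to a fixed interval -/

/-- The closure of the domain contains the points with `t = 0`, `x = 0` or `x = ℓ(t)`. -/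
lemma mem_closure_domain {ℓ : ℝ → ℝ} (hc : ContinuousOn ℓ (Ici 0))
    (hpos : ∀ t ≥ (0:ℝ), 0 < ℓ t) {t x : ℝ} (ht : 0 ≤ t) (hx : x ∈ Icc 0 (ℓ t)) :
    (t, x) ∈ closure {p : ℝ × ℝ | 0 < p.1 ∧ 0 < p.2 ∧ p.2 < ℓ p.1} := by
  set y := x / ℓ t with hy
  have hlt := hpos t ht
  have y0 : 0 ≤ y := div_nonneg hx.1 hlt.le
  have y1 : y ≤ 1 := (div_le_one hlt).2 hx.2
  have hxy : x = y * ℓ t := by rw [hy]; field_simp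
  -- Approach `(t, y ℓ(t))` along a curve which lies in the open domain for small `s > 0`:
  -- the factor `y(1 − s) + s/2` lies strictly between `0` and `1`.
  have hcl : ContinuousWithinAt (fun s => ℓ (t + s)) (Ioi 0) 0 := by
    have h1 : ContinuousWithinAt ℓ (Ici 0) (t + 0) := by simpa using hc t ht
    exact h1.comp (by fun_prop) fun s hs => add_nonneg ht (le_of_lt hs)
  have hcont : ContinuousWithinAt
      (fun s : ℝ => ((t + s, (y * (1 - s) + s / 2) * ℓ (t + s)) : ℝ × ℝ)) (Ioi 0) 0 :=
    ContinuousWithinAt.prodMk (by fun_prop) (ContinuousWithinAt.mul (by fun_prop) hcl)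
  have hT := hcont.tendsto
  simp only [add_zero, sub_zero, mul_one, zero_div, ← hxy] at hT
  refine mem_closure_of_tendsto hT ?_
  have hlt1 : ∀ᶠ s : ℝ in nhdsWithin 0 (Ioi 0), s < 1 :=
    nhdsWithin_le_nhds (gt_mem_nhds one_pos)
  filter_upwards [self_mem_nhdsWithin, hlt1] with s hs hs1
  have hs : 0 < s := hs
  have hp := hpos (t + s) (by linarith)
  refine ⟨by linarith, mul_pos ?_ hp, ?_⟩
  · have := mul_nonneg y0 (by linarith : 0 ≤ 1 - s)
    linarith
  · have := mul_le_of_le_one_left (by linarith : 0 ≤ 1 - s) y1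
    exact mul_lt_of_lt_one_left hp (by linarith)

/-- The integrand of `F̃` after the substitution `σ = l y`, as a function of `(t, l, y)`. Keeping
the length `l` as an independent variable makes it `C¹`, although `ℓ` is only Lipschitz. -/
noncomputable def dens (ε ν : ℝ) (u : ℝ → ℝ → ℝ) (q : ℝ × ℝ × ℝ) : ℝ :=
  q.2.1 * (ε ^ 2 * pt u q.1 (q.2.1 * q.2.2) *
      (u q.1 (q.2.1 * q.2.2) - u q.1 0 * (1 - q.2.2))
    + ν * ε / 2 * (u q.1 (q.2.1 * q.2.2) - u q.1 0 * (1 - q.2.2)) ^ 2)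

lemma contDiffAt_dens {ε ν : ℝ} {u : ℝ → ℝ → ℝ} {U : Set (ℝ × ℝ)} (hU : IsOpen U)
    (hu : ContDiffOn ℝ 2 (fun p : ℝ × ℝ => u p.1 p.2) U) {t l y : ℝ}
    (h0 : (t, 0) ∈ U) (h1 : (t, l * y) ∈ U) :
    ContDiffAt ℝ 1 (dens ε ν u) (t, l, y) := by
  have hp : ContDiffOn ℝ 1 (fun p : ℝ × ℝ => pt u p.1 p.2) U := contDiffOn_pt hU hu
  have c1 : ContDiffAt ℝ 1 (fun q : ℝ × ℝ × ℝ => u q.1 (q.2.1 * q.2.2)) (t, l, y) :=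
    ContDiffAt.comp (g := fun p : ℝ × ℝ => u p.1 p.2)
      (f := fun q : ℝ × ℝ × ℝ => (q.1, q.2.1 * q.2.2)) (t, l, y)
      ((hu.contDiffAt (hU.mem_nhds h1)).of_le (by norm_num)) (by fun_prop)
  have c2 : ContDiffAt ℝ 1 (fun q : ℝ × ℝ × ℝ => pt u q.1 (q.2.1 * q.2.2)) (t, l, y) :=
    ContDiffAt.comp (g := fun p : ℝ × ℝ => pt u p.1 p.2)
      (f := fun q : ℝ × ℝ × ℝ => (q.1, q.2.1 * q.2.2)) (t, l, y)
      (hp.contDiffAt (hU.mem_nhds h1)) (by fun_prop)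
  have c3 : ContDiffAt ℝ 1 (fun q : ℝ × ℝ × ℝ => u q.1 0) (t, l, y) :=
    ContDiffAt.comp (g := fun p : ℝ × ℝ => u p.1 p.2)
      (f := fun q : ℝ × ℝ × ℝ => (q.1, 0)) (t, l, y)
      ((hu.contDiffAt (hU.mem_nhds h0)).of_le (by norm_num)) (by fun_prop)
  have c4 : ContDiffAt ℝ 1 (fun q : ℝ × ℝ × ℝ => q.2.1) (t, l, y) := by fun_prop
  have c5 : ContDiffAt ℝ 1 (fun q : ℝ × ℝ × ℝ => 1 - q.2.2) (t, l, y) := by fun_prop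
  have cg := c1.sub (c3.mul c5)
  exact c4.mul (((contDiffAt_const.mul c2).mul cg).add (contDiffAt_const.mul (cg.pow 2)))

lemma Fmod_eq_integral_dens {ε ν : ℝ} {ℓ : ℝ → ℝ} {u : ℝ → ℝ → ℝ} {U : Set (ℝ × ℝ)}
    (hU : IsOpen U) (hu : ContDiffOn ℝ 2 (fun p : ℝ × ℝ => u p.1 p.2) U) {t : ℝ}
    (hpos : 0 < ℓ t) (h : ∀ σ ∈ Icc 0 (ℓ t), (t, σ) ∈ U) :
    Fmod ε ν ℓ u t = ∫ y in (0:ℝ)..1, dens ε ν u (t, ℓ t, y) := by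
  have cu : ContinuousOn (fun σ => u t σ) (Icc 0 (ℓ t)) := continuousOn_slice hu h
  have cp : ContinuousOn (fun σ => pt u t σ) (Icc 0 (ℓ t)) :=
    continuousOn_slice (contDiffOn_pt (n := 1) hU hu) h
  have hI : uIcc 0 (ℓ t) = Icc 0 (ℓ t) := uIcc_of_le hpos.le
  have hsub := intervalIntegral.mul_integral_comp_mul_left (a := 0) (b := 1)
    (f := fun σ => ε ^ 2 * pt u t σ * (u t σ - u t 0 * (1 - σ / ℓ t))
      + ν * ε / 2 * (u t σ - u t 0 * (1 - σ / ℓ t)) ^ 2) (ℓ t)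
  rw [mul_zero, mul_one] at hsub
  unfold Fmod
  rw [← intervalIntegral.integral_const_mul, ← intervalIntegral.integral_add, ← hsub,
    ← intervalIntegral.integral_const_mul]
  · refine intervalIntegral.integral_congr fun y _ => ?_
    simp only [dens, mul_div_cancel_left₀ y hpos.ne']
  · exact ContinuousOn.intervalIntegrable (by rw [hI]; fun_prop)
  · exact ContinuousOn.intervalIntegrable (by rw [hI]; fun_prop)

/-- The time derivative of the rescaled integrand, written as `ℓ(t)` times the function of
`σ = ℓ(t) y` that is estimated in `slice_ineq`. -/
lemma hasDerivAt_dens {ε ν d : ℝ} {ℓ : ℝ → ℝ} {u : ℝ → ℝ → ℝ} {U : Set (ℝ × ℝ)}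
    (hU : IsOpen U) (hu : ContDiffOn ℝ 2 (fun p : ℝ × ℝ => u p.1 p.2) U) {t y : ℝ}
    (hd : HasDerivAt ℓ d t) (hpos : 0 < ℓ t) (h0 : (t, 0) ∈ U) (h : (t, ℓ t * y) ∈ U) :
    HasDerivAt (fun s => dens ε ν u (s, ℓ s, y))
      (ℓ t * (fun σ => d / ℓ t * (ε ^ 2 * pt u t σ * (u t σ - u t 0 * (1 - σ / ℓ t))
            + ν * ε / 2 * (u t σ - u t 0 * (1 - σ / ℓ t)) ^ 2)
          + ε ^ 2 * (ptt u t σ + px (pt u) t σ * (d * σ / ℓ t))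
              * (u t σ - u t 0 * (1 - σ / ℓ t))
          + (ε ^ 2 * pt u t σ + ν * ε * (u t σ - u t 0 * (1 - σ / ℓ t)))
            * (pt u t σ + px u t σ * (d * σ / ℓ t) - pt u t 0 * (1 - σ / ℓ t))) (ℓ t * y)) t := by
  have hp : ContDiffOn ℝ 1 (fun p : ℝ × ℝ => pt u p.1 p.2) U := contDiffOn_pt hU hu
  have dl := hd.mul_const y
  have d1 := hasDerivAt_curve hU hu (by norm_num) (hasDerivAt_id t) dl h
  have d2 := hasDerivAt_curve hU hp (by norm_num) (hasDerivAt_id t) dl h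
  have d3 := hasDerivAt_curve hU hu (by norm_num) (hasDerivAt_id t) (hasDerivAt_const t (0:ℝ)) h0
  have dg := d1.sub (d3.mul_const (1 - y))
  have hF := hd.mul (((d2.const_mul (ε ^ 2)).mul dg).add ((dg.pow 2).const_mul (ν * ε / 2)))
  refine hF.congr_deriv ?_
  have e1 : ∀ σ, ptt u t σ = pt (pt u) t σ := fun _ => rfl
  simp only [mul_div_cancel_left₀ y hpos.ne', e1, id, Pi.mul_apply, Pi.add_apply, Pi.sub_apply,
    Pi.pow_apply, mul_one, mul_zero, add_zero, ← mul_assoc d (ℓ t) y]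
  have e2 : d * ℓ t * y / ℓ t = d * y := by field_simp
  rw [e2]
  field_simp
  ring

/-- The rescaled integrand is Lipschitz in `t`, uniformly in `y`: `dens` is locally Lipschitz,
hence Lipschitz on the compact image of `[0,T] × [0,1]`. -/
lemma exists_lipschitz_dens {ε ν T : ℝ} {K : NNReal} {ℓ : ℝ → ℝ} {u : ℝ → ℝ → ℝ}
    {U : Set (ℝ × ℝ)} (hU : IsOpen U) (hu : ContDiffOn ℝ 2 (fun p : ℝ × ℝ => u p.1 p.2) U)
    (hK : LipschitzOnWith K ℓ (Icc 0 T)) (hpos : ∀ t ≥ (0:ℝ), 0 < ℓ t)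
    (hmem : ∀ t ≥ (0:ℝ), ∀ σ ∈ Icc 0 (ℓ t), (t, σ) ∈ U) :
    ∃ C : NNReal, ∀ y ∈ Icc (0:ℝ) 1,
      LipschitzOnWith C (fun t => dens ε ν u (t, ℓ t, y)) (Icc 0 T) := by
  set S : Set (ℝ × ℝ × ℝ) :=
    (fun p : ℝ × ℝ => (p.1, ℓ p.1, p.2)) '' (Icc 0 T ×ˢ Icc (0:ℝ) 1) with hS
  have hSc : IsCompact S := by
    refine (isCompact_Icc.prod isCompact_Icc).image_of_continuousOn ?_
    have h1 : ContinuousOn (fun p : ℝ × ℝ => ℓ p.1) (Icc 0 T ×ˢ Icc (0:ℝ) 1) :=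
      hK.continuousOn.comp continuousOn_fst fun p hp => hp.1
    exact continuousOn_fst.prodMk (h1.prodMk continuousOn_snd)
  have hloc : LocallyLipschitzOn S (dens ε ν u) := by
    rintro _ ⟨⟨t, y⟩, ⟨ht, hy⟩, rfl⟩
    have hp := hpos t ht.1
    obtain ⟨C, s, hs, hC⟩ := (contDiffAt_dens (ε := ε) (ν := ν) hU hu
      (hmem t ht.1 0 (left_mem_Icc.2 hp.le))
      (hmem t ht.1 (ℓ t * y) ⟨mul_nonneg hp.le hy.1, mul_le_of_le_one_right hp.le hy.2⟩)
      ).exists_lipschitzOnWith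
    exact ⟨C, s, mem_nhdsWithin_of_mem_nhds hs, hC⟩
  obtain ⟨C, hC⟩ := hloc.exists_lipschitzOnWith_of_compact hSc
  refine ⟨C * max 1 (max K 0), fun y hy => ?_⟩
  have hcurve : LipschitzOnWith (max 1 (max K 0)) (fun t => ((t, ℓ t, y) : ℝ × ℝ × ℝ))
      (Icc 0 T) :=
    (LipschitzWith.id.lipschitzOnWith).prodMk
      (hK.prodMk (LipschitzWith.const y).lipschitzOnWith)
  exact hC.comp hcurve fun t ht => ⟨(t, y), ⟨ht, hy⟩, rfl⟩

/-! ### Absolute continuity and the differential inequality -/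

/-- Lemma 3.7 of the paper. With `|w| ≤ M` and `ℓ ≤ L` on `[0,T]`, the
auxiliary functional `F̃` is absolutely continuous on `[0,T]` and its a.e. derivative
satisfies `F̃' ≤ 2∫ε²u_t² − Ẽ + Cε²(ẇ² + ℓ'²)`, with `C` depending only on
`L, M, ν, ℓ₀`. -/
theorem stmt13
    (l0 L M ν : ℝ) (hl0 : 0 < l0) (hL : l0 ≤ L) (hM : 0 < M) (hν : 0 ≤ ν) :
    ∃ C > (0:ℝ),
      ∀ ε T : ℝ, 0 < ε → 0 < T →
      ∀ ℓ : ℝ → ℝ,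
        (∃ K : NNReal, LipschitzOnWith K ℓ (Ici 0)) →
        MonotoneOn ℓ (Ici 0) → ℓ 0 = l0 → (∀ t ≥ (0:ℝ), l0 ≤ ℓ t) →
        (∀ᵐ t ∂volume, t ∈ Ioi (0:ℝ) → ∀ d, HasDerivAt ℓ d t → d < 1/ε) →
      ∀ u : ℝ → ℝ → ℝ,
        (∃ U : Set (ℝ × ℝ), IsOpen U ∧
          closure {p : ℝ × ℝ | 0 < p.1 ∧ 0 < p.2 ∧ p.2 < ℓ p.1} ⊆ U ∧
          ContDiffOn ℝ 2 (fun p : ℝ × ℝ => u p.1 p.2) U) →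
        (∀ t x : ℝ, 0 < t → 0 < x → x < ℓ t →
          ε ^ 2 * ptt u t x - pxx u t x + ν * ε * pt u t x = 0) →
        (∀ t ≥ (0:ℝ), u t (ℓ t) = 0) →
        (∀ t ∈ Icc (0:ℝ) T, |u t 0| ≤ M) →
        (∀ t ∈ Icc (0:ℝ) T, ℓ t ≤ L) →
        (IntervalIntegrable (deriv (Fmod ε ν ℓ u)) volume 0 T
          ∧ ∀ t ∈ Icc (0:ℝ) T,
              Fmod ε ν ℓ u t = Fmod ε ν ℓ u 0 + ∫ s in (0:ℝ)..t, deriv (Fmod ε ν ℓ u) s)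
        ∧ (∀ᵐ t ∂volume, t ∈ Ioo (0:ℝ) T →
            deriv (Fmod ε ν ℓ u) t
              ≤ 2 * (∫ σ in (0:ℝ)..ℓ t, ε ^ 2 * (pt u t σ) ^ 2)
                - Emod ε ℓ u t
                + C * ε ^ 2 * ((pt u t 0) ^ 2 + (deriv ℓ t) ^ 2)) := by
  have hLp : 0 < L := hl0.trans_le hL
  refine ⟨L * ((1 + M ^ 2 / l0 ^ 2) + ν ^ 2 * (L ^ 2 + M ^ 2)), by positivity, ?_⟩
  rintro ε T - hT ℓ ⟨K, hK⟩ - - hl _ u ⟨U, hU, hcl, hu⟩ hpde hbc hw hℓL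
  have hpos : ∀ t ≥ (0:ℝ), 0 < ℓ t := fun t ht => hl0.trans_le (hl t ht)
  have hmem : ∀ t ≥ (0:ℝ), ∀ σ ∈ Icc 0 (ℓ t), (t, σ) ∈ U := fun t ht σ hσ =>
    hcl (mem_closure_domain hK.continuousOn hpos ht hσ)
  have hFeq : ∀ t ≥ (0:ℝ), Fmod ε ν ℓ u t = ∫ y in (0:ℝ)..1, dens ε ν u (t, ℓ t, y) :=
    fun t ht => Fmod_eq_integral_dens hU hu (hpos t ht) (hmem t ht)
  have hscale : ∀ t ≥ (0:ℝ), ∀ y ∈ Icc (0:ℝ) 1, ℓ t * y ∈ Icc 0 (ℓ t) := fun t ht y hy =>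
    ⟨mul_nonneg (hpos t ht).le hy.1, mul_le_of_le_one_right (hpos t ht).le hy.2⟩
  have hzero : ∀ t ≥ (0:ℝ), (t, (0:ℝ)) ∈ U := fun t ht =>
    hmem t ht 0 (left_mem_Icc.2 (hpos t ht).le)
  have hdcont : ∀ t ≥ (0:ℝ), ContinuousOn (fun y => dens ε ν u (t, ℓ t, y)) (Icc 0 1) := by
    intro t ht y hy
    have h := (contDiffAt_dens (ε := ε) (ν := ν) hU hu (hzero t ht)
      (hmem t ht _ (hscale t ht y hy))).continuousAt
    exact (h.comp (f := fun y : ℝ => (t, ℓ t, y)) (by fun_prop)).continuousWithinAt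
  have hdint : ∀ t ≥ (0:ℝ),
      IntervalIntegrable (fun y => dens ε ν u (t, ℓ t, y)) volume 0 1 := fun t ht =>
    ContinuousOn.intervalIntegrable (by rw [uIcc_of_le zero_le_one]; exact hdcont t ht)
  obtain ⟨C, hC⟩ := exists_lipschitz_dens (ε := ε) (ν := ν) (T := T) hU hu
    (hK.mono Icc_subset_Ici_self) hpos hmem
  have hFlip : LipschitzOnWith C (Fmod ε ν ℓ u) (Icc 0 T) := by
    refine LipschitzOnWith.of_dist_le_mul fun t ht s hs => ?_
    rw [Real.dist_eq, hFeq t ht.1, hFeq s hs.1,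
      ← intervalIntegral.integral_sub (hdint t ht.1) (hdint s hs.1)]
    have h := intervalIntegral.norm_integral_le_of_norm_le_const (a := (0:ℝ)) (b := 1)
      (f := fun y => dens ε ν u (t, ℓ t, y) - dens ε ν u (s, ℓ s, y))
      (C := C * dist t s) fun y hy => by
        rw [uIoc_of_le zero_le_one] at hy
        rw [← dist_eq_norm]
        exact (hC y (Ioc_subset_Icc_self hy)).dist_le_mul t ht s hs
    simpa using h
  refine ⟨⟨?_, ?_⟩, ?_⟩
  · exact (LipschitzOnWith.absolutelyContinuousOnInterval
      (by rwa [uIcc_of_le hT.le])).intervalIntegrable_deriv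
  · intro t ht
    rw [AbsolutelyContinuousOnInterval.integral_deriv_eq_sub
      (LipschitzOnWith.absolutelyContinuousOnInterval (K := C) ?_)]
    · ring
    · rw [uIcc_of_le ht.1]
      exact hFlip.mono (Icc_subset_Icc_right ht.2)
  · filter_upwards [hK.ae_differentiableWithinAt_of_mem_real] with t hdiff ht
    have ht0 : 0 ≤ t := ht.1.le
    have htI : t ∈ Icc 0 T := Ioo_subset_Icc_self ht
    have hd : HasDerivAt ℓ (deriv ℓ t) t :=
      ((hdiff ht0).differentiableAt (Ici_mem_nhds ht.1)).hasDerivAt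
    have hlt := hpos t ht0
    have hp1 : ContDiffOn ℝ 1 (fun p : ℝ × ℝ => pt u p.1 p.2) U := contDiffOn_pt hU hu
    have hq1 : ContDiffOn ℝ 1 (fun p : ℝ × ℝ => px u p.1 p.2) U := contDiffOn_px hU hu
    have hptt : ContDiffOn ℝ 0 (fun p : ℝ × ℝ => ptt u p.1 p.2) U :=
      contDiffOn_pt (f := pt u) hU hp1
    have hpxt : ContDiffOn ℝ 0 (fun p : ℝ × ℝ => px (pt u) p.1 p.2) U :=
      contDiffOn_px (f := pt u) hU hp1
    have hpxx : ContDiffOn ℝ 0 (fun p : ℝ × ℝ => pxx u p.1 p.2) U :=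
      contDiffOn_px (f := px u) hU hq1
    have hsl := hmem t ht0
    have cu := continuousOn_slice hu hsl
    have cp := continuousOn_slice hp1 hsl
    have cq := continuousOn_slice hq1 hsl
    have ctt := continuousOn_slice hptt hsl
    have cxt := continuousOn_slice hpxt hsl
    have cxx := continuousOn_slice hpxx hsl
    set E : ℝ → ℝ := fun σ =>
      deriv ℓ t / ℓ t * (ε ^ 2 * pt u t σ * (u t σ - u t 0 * (1 - σ / ℓ t))
            + ν * ε / 2 * (u t σ - u t 0 * (1 - σ / ℓ t)) ^ 2)
          + ε ^ 2 * (ptt u t σ + px (pt u) t σ * (deriv ℓ t * σ / ℓ t))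
              * (u t σ - u t 0 * (1 - σ / ℓ t))
          + (ε ^ 2 * pt u t σ + ν * ε * (u t σ - u t 0 * (1 - σ / ℓ t)))
            * (pt u t σ + px u t σ * (deriv ℓ t * σ / ℓ t) - pt u t 0 * (1 - σ / ℓ t)) with hE
    have cE : ContinuousOn E (Icc 0 (ℓ t)) := by fun_prop
    have cE' : ContinuousOn (fun y => ℓ t * E (ℓ t * y)) (Icc 0 1) :=
      continuousOn_const.mul (cE.comp (by fun_prop) (hscale t ht0))
    have hLeib := (intervalIntegral.hasDerivAt_integral_of_dominated_loc_of_lip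
      (μ := volume) (a := 0) (b := 1) (F := fun s y => dens ε ν u (s, ℓ s, y))
      (F' := fun y => ℓ t * E (ℓ t * y)) (bound := fun _ => (C : ℝ)) (s := Icc 0 T)
      (Icc_mem_nhds ht.1 ht.2)
      (by
        filter_upwards [Ioi_mem_nhds ht.1] with s hs
        exact (hdint s (le_of_lt hs)).def'.aestronglyMeasurable)
      (hdint t ht0)
      (ContinuousOn.intervalIntegrable
        (by rw [uIcc_of_le zero_le_one]; exact cE')).def'.aestronglyMeasurable
      (by
        refine Filter.Eventually.of_forall fun y hy => ?_
        rw [uIoc_of_le zero_le_one] at hy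
        simpa using hC y (Ioc_subset_Icc_self hy))
      intervalIntegrable_const
      (by
        refine Filter.Eventually.of_forall fun y hy => ?_
        rw [uIoc_of_le zero_le_one] at hy
        exact hasDerivAt_dens hU hu hd hlt (hzero t ht0)
          (hsl _ (hscale t ht0 y (Ioc_subset_Icc_self hy))))).2
    have hFd : HasDerivAt (Fmod ε ν ℓ u) (∫ y in (0:ℝ)..1, ℓ t * E (ℓ t * y)) t := by
      refine hLeib.congr_of_eventuallyEq ?_
      filter_upwards [Ioi_mem_nhds ht.1] with s hs
      exact hFeq s (le_of_lt hs)
    have hsub : ∫ y in (0:ℝ)..1, ℓ t * E (ℓ t * y) = ∫ σ in (0:ℝ)..ℓ t, E σ := by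
      rw [intervalIntegral.integral_const_mul, intervalIntegral.mul_integral_comp_mul_left]
      simp
    have hslice : ∀ {f : ℝ → ℝ → ℝ}, ContDiffOn ℝ 1 (fun p : ℝ × ℝ => f p.1 p.2) U →
        ∀ σ ∈ Icc 0 (ℓ t), HasDerivAt (fun σ => f t σ) (px f t σ) σ := by
      intro f hf σ hσ
      simpa using hasDerivAt_curve hU hf one_ne_zero (hasDerivAt_const σ t) (hasDerivAt_id σ)
        (hsl σ hσ)
    rw [hFd.deriv, hsub]
    exact slice_ineq hl0 (hl t ht0) (hℓL t htI) (hw t htI)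
      (hslice (hu.of_le (by norm_num))) (hslice hq1) (hslice hp1) cxx cxt ctt rfl (hbc t ht0)
      fun σ hσ => hpde t σ ht.1 hσ.1 hσ.2
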